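/- Let λ be a left-infinite word and ρ a right-infinite word over a finite alphabet A, and let m be a natural number. Write λ = λ'·λ_m and ρ = ρ_m·ρ', where λ_m is the suffix of λ of length m, ρ_m is the prefix of ρ of length m, λ' is the left-infinite word obtained from λ by deleting its last m letters, and ρ' is the right-infinite word obtained from ρ by deleting its first m letters. Then for every natural number n with rog_{λ,ρ}(n) ≥ m, one has n ≥ m and rog_{λ',ρ'}(n − m) = rog_{λ,ρ}(n) − m. -/

import Mathlib

/-- The suffix of length `n` of the left-infinite word `⋯ (lam 2)(lam 1)(lam 0)`. -/
def lSuffix {A : Type*} (lam : ℕ → A) (n : ℕ) : List A := (List.range n).reverse.map lam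

/-- The prefix of length `n` of the right-infinite word `(rho 0)(rho 1)(rho 2) ⋯`. -/
def rPrefix {A : Type*} (rho : ℕ → A) (n : ℕ) : List A := (List.range n).map rho

/-- The left overlap gap between two finite words. -/
noncomputable def logGap {A : Type*} (u v : List A) : ℕ :=
  sInf {n | ∃ x x' : List A, x.length = n ∧ x'.length = n ∧ u ++ x = x' ++ v}

/-- The right overlap gap between two finite words. -/
noncomputable def rogGap {A : Type*} (u v : List A) : ℕ :=
  sInf {n | ∃ x x' : List A, x.length = n ∧ x'.length = n ∧ x ++ u = v ++ x'}

/-- The overlap gap between two finite words. -/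
noncomputable def ogGap {A : Type*} (u v : List A) : ℕ := min (logGap u v) (rogGap u v)

theorem rog_mem_iff {A : Type*} (lam rho : ℕ → A) (n k : ℕ) :
    (∃ x x' : List A, x.length = k ∧ x'.length = k ∧
      x ++ lSuffix lam n = rPrefix rho n ++ x') ↔
    ∀ p, k ≤ p → p < n → lam (n - 1 - (p - k)) = rho p := by
  constructor
  · rintro ⟨x, x', hx, hx', h⟩ p hp hn
    have h1 : (x ++ lSuffix lam n)[p]? = (rPrefix rho n ++ x')[p]? := by rw [h]
    rw [List.getElem?_append_right (by omega),
      List.getElem?_append_left (by simp [rPrefix, hn]), hx] at h1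
    have h2 : p - k < n := by omega
    simpa [lSuffix, rPrefix, List.getElem?_reverse, h2, hn,
      show n - 1 - (p - k) < n by omega] using h1
  · intro h
    refine ⟨(List.range k).map (fun p => if p < n then rho p else lam (n + k - 1 - p)),
      (List.range k).map (fun i => lam (k - 1 - i)), by simp, by simp, ?_⟩
    apply List.ext_getElem
    · simp [lSuffix, rPrefix, Nat.add_comm]
    · intro p h1 h2
      have h3 : p < k + n := by simpa [lSuffix] using h1
      simp only [lSuffix, rPrefix, List.getElem_append, List.length_map, List.length_range,
        List.getElem_map, List.getElem_range, List.getElem_reverse]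
      split_ifs with ha hb
      · rfl
      · congr 1; omega
      · exact h p (by omega) (by assumption)
      · congr 1; omega

theorem rog_shift {A : Type*} [Fintype A] [Nonempty A] (lam rho : ℕ → A) (m : ℕ) :
    ∀ n : ℕ, m ≤ rogGap (lSuffix lam n) (rPrefix rho n) →
      m ≤ n ∧
      rogGap (lSuffix (fun i => lam (i + m)) (n - m))
          (rPrefix (fun i => rho (i + m)) (n - m)) =
        rogGap (lSuffix lam n) (rPrefix rho n) - m := by
  intro n hm
  unfold rogGap at *
  simp only [rog_mem_iff] at *
  have hle : sInf {k | ∀ p, k ≤ p → p < n → lam (n - 1 - (p - k)) = rho p} ≤ n :=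
    Nat.sInf_le (by intro p h1 h2; omega)
  have hmem : sInf {k | ∀ p, k ≤ p → p < n → lam (n - 1 - (p - k)) = rho p} ∈
      {k | ∀ p, k ≤ p → p < n → lam (n - 1 - (p - k)) = rho p} :=
    Nat.sInf_mem ⟨n, by intro p h1 h2; omega⟩
  have hmin : ∀ k ∈ {k | ∀ p, k ≤ p → p < n → lam (n - 1 - (p - k)) = rho p},
      sInf {k | ∀ p, k ≤ p → p < n → lam (n - 1 - (p - k)) = rho p} ≤ k :=
    fun k hk => Nat.sInf_le hk
  generalize sInf {k | ∀ p, k ≤ p → p < n → lam (n - 1 - (p - k)) = rho p} = s at *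
  refine ⟨hm.trans hle, ?_⟩
  apply IsLeast.csInf_eq
  constructor
  · intro p h1 h2
    rw [← hmem (p + m) (by omega) (by omega)]
    congr 1; omega
  · intro k hk
    have := hmin (k + m) (by
      intro p h1 h2
      have := hk (p - m) (by omega) (by omega)
      rw [show p - m + m = p by omega] at this
      rw [← this]
      congr 1; omega)
    omega
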